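/- Let α ∈ (0, 1] be a fixed real number and for each B ≥ 1 set K_B = ⌈α·B⌉. Then in the coupon collector process with B coupons and replacement parameter K_B, the factor f_B = (E[T_{B,K_B}] + K_B)/B converges to ln(1/α) + α as B → ∞. In particular, for a single collector the ratio of the mean number of cards to be bought (including the directly purchased missing cards) to the album size depends asymptotically only on the fraction α of purchasable replacement cards, not on the album size B. -/

import Mathlib

/-!
Suppose `m` of `N` coupons are still missing and collection stops once only `K` are. A draw hits
a missing coupon with probability `m / N`, so the expected number of further draws is
`φ m = ∑_{K < j ≤ m} N / j = N (H_m - H_K)`. Hence, writing `R n` for the set of coupons missing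
after `n` draws, each draw lowers `E[φ |R n|]` by exactly `P(K < |R n|) = P(n < T)`. These
decrements telescope; as `φ |R n| ≤ φ N` on the event `K < |R n|` and vanishes off it, the
remainder tends to zero and `E[T] = ∑ P(n < T) = φ N`. Finally `H_n - log n → γ` gives
`H_B - H_K → log (1 / α)` when `K / B → α`.
-/

open MeasureTheory ProbabilityTheory Filter
open scoped ENNReal

/-- The uniform probability measure on `Fin B`. -/
noncomputable def uniformFin (B : ℕ) : Measure (Fin B) :=
  (B : ℝ≥0∞)⁻¹ • Measure.count

/-- The stopping time `T_{B,K}`: the least `n` such that at least `B - K` distinct coupons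
appear among the first `n` draws. -/
noncomputable def collectTime (B K : ℕ) (ω : ℕ → Fin B) : ℕ :=
  sInf {n : ℕ | B - K ≤ (Finset.image ω (Finset.range n)).card}

section Harmonic

variable {β : Type*} {l : Filter β} {a b : β → ℕ} {c : ℝ}

theorem tendsto_atTop_of_tendsto_natCast_div (hb : Tendsto b l atTop) (hc : 0 < c)
    (h : Tendsto (fun i ↦ (a i : ℝ) / b i) l (nhds c)) : Tendsto a l atTop := by
  rw [← tendsto_natCast_atTop_iff (R := ℝ)]
  refine (h.pos_mul_atTop hc (tendsto_natCast_atTop_iff.2 hb)).congr' ?_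
  filter_upwards [hb.eventually_ne_atTop 0] with i hi
  exact div_mul_cancel₀ _ (Nat.cast_ne_zero.2 hi)

theorem tendsto_harmonic_sub_harmonic (hb : Tendsto b l atTop) (hc : 0 < c)
    (h : Tendsto (fun i ↦ (a i : ℝ) / b i) l (nhds c)) :
    Tendsto (fun i ↦ (harmonic (a i) - harmonic (b i) : ℝ)) l (nhds (Real.log c)) := by
  have ha : Tendsto a l atTop := tendsto_atTop_of_tendsto_natCast_div hb hc h
  have hγ := Real.tendsto_harmonic_sub_log
  have hlim := ((hγ.comp ha).sub (hγ.comp hb)).add (h.log hc.ne')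
  rw [sub_self, zero_add] at hlim
  refine hlim.congr' ?_
  filter_upwards [ha.eventually_ne_atTop 0, hb.eventually_ne_atTop 0] with i hai hbi
  rw [Real.log_div (Nat.cast_ne_zero.2 hai) (Nat.cast_ne_zero.2 hbi)]
  simp only [Function.comp_apply]
  ring

end Harmonic

section ExpectedWait

/-- The expected number of further uniform draws from `N` coupons when `m` of them are missing and
collection stops as soon as at most `K` are missing. Taking `max m K` makes it vanish once
`m ≤ K`. -/
noncomputable def expectedWait (N K m : ℕ) : ℝ := N * (harmonic (max m K) - harmonic K)

variable {N K m m' : ℕ}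

theorem expectedWait_of_le (h : m ≤ K) : expectedWait N K m = 0 := by
  simp [expectedWait, max_eq_right h]

theorem expectedWait_succ (h : K ≤ m) :
    expectedWait N K (m + 1) = expectedWait N K m + N / (m + 1) := by
  rw [expectedWait, expectedWait, max_eq_left h, max_eq_left (h.trans m.le_succ), harmonic_succ]
  push_cast
  ring

theorem monotone_expectedWait (N K : ℕ) : Monotone (expectedWait N K) := by
  refine monotone_nat_of_le_succ fun m ↦ ?_
  rcases le_or_gt K m with h | h
  · rw [expectedWait_succ h]
    exact le_add_of_nonneg_right (by positivity)
  · rw [expectedWait_of_le h.le, expectedWait_of_le h]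

theorem expectedWait_nonneg (N K m : ℕ) : 0 ≤ expectedWait N K m := by
  rw [← expectedWait_of_le (N := N) K.zero_le]
  exact monotone_expectedWait N K m.zero_le

theorem expectedWait_le_mul_ite (h : m ≤ m') :
    expectedWait N K m ≤ expectedWait N K m' * if K < m then 1 else 0 := by
  split_ifs with hm
  · simpa using monotone_expectedWait N K h
  · simp [expectedWait_of_le (not_lt.1 hm)]

theorem sum_expectedWait_card_erase_div {ι : Type*} [Fintype ι] [DecidableEq ι] (K : ℕ)
    (R : Finset ι) :
    (∑ x, expectedWait (Fintype.card ι) K (R.erase x).card) / Fintype.card ι =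
      expectedWait (Fintype.card ι) K R.card - if K < R.card then 1 else 0 := by
  set φ := expectedWait (Fintype.card ι) K
  split_ifs with hR
  · obtain ⟨m, hm⟩ := Nat.exists_eq_add_one_of_ne_zero (K.zero_le.trans_lt hR).ne'
    have hcard : (Fintype.card ι : ℝ) ≠ 0 :=
      Nat.cast_ne_zero.2 ((K.zero_le.trans_lt hR).trans_le R.card_le_univ).ne'
    have hφ : φ (m + 1) = φ m + Fintype.card ι / (m + 1) := expectedWait_succ (by lia)
    have hx (x : ι) : φ (R.erase x).card =
        φ (m + 1) - if x ∈ R then (Fintype.card ι : ℝ) / (m + 1) else 0 := by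
      split_ifs with hxR
      · rw [Finset.card_erase_of_mem hxR, hm, Nat.add_sub_cancel, hφ, add_sub_cancel_right]
      · rw [Finset.erase_eq_of_notMem hxR, hm, sub_zero]
    simp only [hx, Finset.sum_sub_distrib, Finset.sum_const, Finset.card_univ, nsmul_eq_mul,
      Finset.sum_ite_mem, Finset.univ_inter, hm]
    push_cast
    field_simp
  · have hx (x : ι) : φ (R.erase x).card = 0 :=
      expectedWait_of_le (Finset.card_erase_le.trans (not_lt.1 hR))
    simp [hx, φ, expectedWait_of_le (not_lt.1 hR)]

end ExpectedWait

section Expectation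

variable {Ω : Type*} [MeasurableSpace Ω] {μ : Measure Ω}

theorem integral_natCast_eq_tsum_measureReal_lt [IsFiniteMeasure μ] {T : Ω → ℕ}
    (hT : ∀ n, NullMeasurableSet {ω | n < T ω} μ) :
    ∫ ω, (T ω : ℝ) ∂μ = ∑' n, μ.real {ω | n < T ω} := by
  have hsum (ω : Ω) :
      (T ω : ℝ≥0∞) = ∑' n, {ω | n < T ω}.indicator (1 : Ω → ℝ≥0∞) ω := by
    have hone : ∀ n ∈ Finset.range (T ω),
        {ω | n < T ω}.indicator (1 : Ω → ℝ≥0∞) ω = 1 := fun n hn ↦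
      Set.indicator_of_mem (s := {ω | n < T ω}) (Finset.mem_range.1 hn) 1
    rw [tsum_eq_sum (s := Finset.range (T ω)) (by simp +contextual), Finset.sum_congr rfl hone]
    simp
  have hmeas (n : ℕ) : AEMeasurable ({ω | n < T ω}.indicator (1 : Ω → ℝ≥0∞)) μ :=
    aemeasurable_one.indicator₀ (hT n)
  calc ∫ ω, (T ω : ℝ) ∂μ
      = ∫ ω, (∑' n, {ω | n < T ω}.indicator (1 : Ω → ℝ≥0∞) ω).toReal ∂μ := by
        simp [← hsum]
    _ = (∫⁻ ω, ∑' n, {ω | n < T ω}.indicator (1 : Ω → ℝ≥0∞) ω ∂μ).toReal :=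
        integral_toReal (.tsum hmeas) (.of_forall fun ω ↦ by simp [← hsum])
    _ = ∑' n, μ.real {ω | n < T ω} := by
        rw [lintegral_tsum hmeas]
        simp_rw [lintegral_indicator_one₀ (hT _)]
        exact ENNReal.tsum_toReal_eq fun _ ↦ measure_ne_top _ _

theorem integral_uniformOn_univ {ι : Type*} [Fintype ι] [MeasurableSpace ι]
    [MeasurableSingletonClass ι] (f : ι → ℝ) :
    ∫ x, f x ∂(uniformOn Set.univ) = (∑ x, f x) / Fintype.card ι := by
  simp [uniformOn, ProbabilityTheory.cond, integral_smul_measure, integral_count, div_eq_inv_mul]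

theorem integral_indepFun_uniformOn_univ {ι γ : Type*} [Fintype ι] [MeasurableSpace ι]
    [MeasurableSingletonClass ι] [Finite γ] [MeasurableSpace γ] [MeasurableSingletonClass γ]
    [IsFiniteMeasure μ] {X : Ω → ι} {Y : Ω → γ} (hYX : IndepFun Y X μ)
    (hX : HasLaw X (uniformOn Set.univ) μ) (hY : AEMeasurable Y μ) (F : γ → ι → ℝ) :
    ∫ ω, F (Y ω) (X ω) ∂μ = ∫ ω, (∑ x, F (Y ω) x) / Fintype.card ι ∂μ := by
  have hlaw : HasLaw Y (μ.map Y) μ := ⟨hY, rfl⟩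
  calc ∫ ω, F (Y ω) (X ω) ∂μ
      = ∫ p, F p.1 p.2 ∂((μ.map Y).prod (uniformOn Set.univ)) :=
        (hYX.hasLaw_prod hlaw hX).integral_comp (f := fun p ↦ F p.1 p.2)
          Measurable.of_discrete.aestronglyMeasurable
    _ = ∫ y, (∑ x, F y x) / Fintype.card ι ∂(μ.map Y) := by
        rw [integral_prod _ .of_finite]
        simp only [integral_uniformOn_univ]
    _ = ∫ ω, (∑ x, F (Y ω) x) / Fintype.card ι ∂μ :=
        integral_map hY Measurable.of_discrete.aestronglyMeasurable

end Expectation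

section Collector

variable {Ω ι : Type*} [Fintype ι] [DecidableEq ι] {X : ℕ → Ω → ι} {K : ℕ}

/-- The set of coupons not among the first `n` draws `X 0, …, X (n - 1)`. Counting these rather
than the collected coupons avoids the truncated subtraction `B - K`. -/
def missingCoupons (X : ℕ → Ω → ι) (n : ℕ) (ω : Ω) : Finset ι :=
  ((Finset.range n).image (X · ω))ᶜ

/-- The number of draws after which at most `K` coupons are missing: the stopping time `T_{B,K}`
for draws on an arbitrary sample space. It is `0` if more than `K` coupons stay missing forever. -/
noncomputable def waitingTime (X : ℕ → Ω → ι) (K : ℕ) (ω : Ω) : ℕ :=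
  sInf {n | (missingCoupons X n ω).card ≤ K}

theorem missingCoupons_zero (X : ℕ → Ω → ι) (ω : Ω) : missingCoupons X 0 ω = Finset.univ := by
  simp [missingCoupons]

theorem missingCoupons_succ (X : ℕ → Ω → ι) (n : ℕ) (ω : Ω) :
    missingCoupons X (n + 1) ω = (missingCoupons X n ω).erase (X n ω) := by
  simp [missingCoupons, Finset.range_add_one, Finset.compl_insert]

theorem antitone_card_missingCoupons (X : ℕ → Ω → ι) (ω : Ω) :
    Antitone fun n ↦ (missingCoupons X n ω).card :=
  antitone_nat_of_succ_le fun n ↦ by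
    rw [missingCoupons_succ]
    exact Finset.card_erase_le

theorem lt_waitingTime_iff {ω : Ω} (h : ∃ n, (missingCoupons X n ω).card ≤ K) (n : ℕ) :
    n < waitingTime X K ω ↔ K < (missingCoupons X n ω).card := by
  let stopped : Set ℕ := {n | (missingCoupons X n ω).card ≤ K}
  refine ⟨fun hn ↦ not_le.1 (Nat.notMem_of_lt_sInf (s := stopped) hn), fun hn ↦ ?_⟩
  by_contra! hle
  have hcard_le : (missingCoupons X (waitingTime X K ω) ω).card ≤ K := Nat.sInf_mem h
  exact hn.not_ge ((antitone_card_missingCoupons X ω hle).trans hcard_le)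

theorem collectTime_eq_waitingTime {B : ℕ} (X : ℕ → Ω → Fin B) (K : ℕ) (ω : Ω) :
    collectTime B K (X · ω) = waitingTime X K ω := by
  simp only [collectTime, waitingTime, missingCoupons, Finset.card_compl, Fintype.card_fin,
    Nat.sub_le_iff_le_add, Nat.add_comm]

variable [MeasurableSpace Ω] {μ : Measure Ω} [MeasurableSpace ι] [MeasurableSingletonClass ι]

theorem aemeasurable_missingCoupons (hX : ∀ i, AEMeasurable (X i) μ) (n : ℕ) :
    AEMeasurable (missingCoupons X n) μ := by
  induction n with
  | zero => simpa only [funext (missingCoupons_zero X)] using aemeasurable_const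
  | succ n ih =>
    simp only [funext (missingCoupons_succ X n)]
    exact (Measurable.of_discrete (f := fun p : Finset ι × ι ↦ p.1.erase p.2)).comp_aemeasurable
      (ih.prodMk (hX n))

theorem nullMeasurableSet_lt_card_missingCoupons (hX : ∀ i, AEMeasurable (X i) μ) (K n : ℕ) :
    NullMeasurableSet {ω | K < (missingCoupons X n ω).card} μ :=
  (aemeasurable_missingCoupons hX n).nullMeasurable
    (MeasurableSet.of_discrete (s := {R : Finset ι | K < R.card}))

theorem integrable_comp_missingCoupons [IsFiniteMeasure μ] (hX : ∀ i, AEMeasurable (X i) μ)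
    (n : ℕ) (F : Finset ι → ℝ) : Integrable (fun ω ↦ F (missingCoupons X n ω)) μ :=
  Integrable.of_finite.comp_aemeasurable (aemeasurable_missingCoupons hX n)

theorem integral_ite_lt_card_missingCoupons (hX : ∀ i, AEMeasurable (X i) μ) (K n : ℕ) :
    ∫ ω, (if K < (missingCoupons X n ω).card then (1 : ℝ) else 0) ∂μ =
      μ.real {ω | K < (missingCoupons X n ω).card} := by
  have hset := nullMeasurableSet_lt_card_missingCoupons hX K n
  simpa [Set.indicator_apply] using integral_indicator₀ (f := fun _ ↦ (1 : ℝ)) hset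

theorem indepFun_missingCoupons (hindep : iIndepFun X μ) (hX : ∀ i, AEMeasurable (X i) μ)
    (n : ℕ) : IndepFun (missingCoupons X n) (X n) μ := by
  have hpast := hindep.indepFun_finset₀ (Finset.range n) {n} (by simp) hX
  have hmissing : missingCoupons X n =
      (fun f : Finset.range n → ι ↦ (Finset.univ.image f)ᶜ) ∘ fun ω i ↦ X i ω := by
    ext ω x
    simp [missingCoupons]
  rw [hmissing]
  exact hpast.comp (ψ := fun f : ({n} : Finset ℕ) → ι ↦ f ⟨n, Finset.mem_singleton_self n⟩)
    Measurable.of_discrete Measurable.of_discrete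

variable (hindep : iIndepFun X μ) (hlaw : ∀ i, HasLaw (X i) (uniformOn Set.univ) μ)
include hindep hlaw

theorem integral_expectedWait_card_missingCoupons_succ (K n : ℕ) :
    ∫ ω, expectedWait (Fintype.card ι) K (missingCoupons X (n + 1) ω).card ∂μ =
      ∫ ω, expectedWait (Fintype.card ι) K (missingCoupons X n ω).card ∂μ -
        μ.real {ω | K < (missingCoupons X n ω).card} := by
  have := hindep.isProbabilityMeasure
  have hX (i : ℕ) : AEMeasurable (X i) μ := (hlaw i).aemeasurable
  set φ := expectedWait (Fintype.card ι) K
  calc ∫ ω, φ (missingCoupons X (n + 1) ω).card ∂μ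
      = ∫ ω, (∑ x, φ ((missingCoupons X n ω).erase x).card) / Fintype.card ι ∂μ := by
        simp only [missingCoupons_succ]
        exact integral_indepFun_uniformOn_univ (indepFun_missingCoupons hindep hX n) (hlaw n)
          (aemeasurable_missingCoupons hX n) fun R x ↦ φ (R.erase x).card
    _ = ∫ ω, (φ (missingCoupons X n ω).card -
          if K < (missingCoupons X n ω).card then 1 else 0) ∂μ := by
        simp only [φ, sum_expectedWait_card_erase_div]
    _ = _ := by
        rw [integral_sub (integrable_comp_missingCoupons hX n fun R ↦ φ R.card)
          (integrable_comp_missingCoupons hX n fun R ↦ if K < R.card then 1 else 0),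
          integral_ite_lt_card_missingCoupons hX]

theorem sum_range_measureReal_lt_card_missingCoupons (K n : ℕ) :
    ∑ i ∈ Finset.range n, μ.real {ω | K < (missingCoupons X i ω).card} =
      expectedWait (Fintype.card ι) K (Fintype.card ι) -
        ∫ ω, expectedWait (Fintype.card ι) K (missingCoupons X n ω).card ∂μ := by
  have := hindep.isProbabilityMeasure
  induction n with
  | zero => simp [missingCoupons_zero]
  | succ n ih =>
    rw [Finset.sum_range_succ, ih, integral_expectedWait_card_missingCoupons_succ hindep hlaw]
    ring

theorem integral_expectedWait_card_missingCoupons_le (K n : ℕ) :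
    ∫ ω, expectedWait (Fintype.card ι) K (missingCoupons X n ω).card ∂μ ≤
      expectedWait (Fintype.card ι) K (Fintype.card ι) *
        μ.real {ω | K < (missingCoupons X n ω).card} := by
  have := hindep.isProbabilityMeasure
  have hX (i : ℕ) : AEMeasurable (X i) μ := (hlaw i).aemeasurable
  rw [← integral_ite_lt_card_missingCoupons hX, ← integral_const_mul]
  exact integral_mono
    (integrable_comp_missingCoupons hX n fun R ↦ expectedWait (Fintype.card ι) K R.card)
    (integrable_comp_missingCoupons hX n fun R ↦
      expectedWait (Fintype.card ι) K (Fintype.card ι) * if K < R.card then 1 else 0)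
    fun ω ↦ expectedWait_le_mul_ite (Finset.card_le_univ _)

theorem hasSum_measureReal_lt_card_missingCoupons (K : ℕ) :
    HasSum (fun n ↦ μ.real {ω | K < (missingCoupons X n ω).card})
      (expectedWait (Fintype.card ι) K (Fintype.card ι)) := by
  have hpartial := sum_range_measureReal_lt_card_missingCoupons hindep hlaw K
  have hnonneg (n : ℕ) :
      0 ≤ ∫ ω, expectedWait (Fintype.card ι) K (missingCoupons X n ω).card ∂μ :=
    integral_nonneg fun ω ↦ expectedWait_nonneg _ _ _
  have hsummable : Summable fun n ↦ μ.real {ω | K < (missingCoupons X n ω).card} :=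
    summable_of_sum_range_le (fun _ ↦ measureReal_nonneg)
      fun n ↦ (hpartial n).trans_le (sub_le_self _ (hnonneg n))
  have hremainder : Tendsto
      (fun n ↦ ∫ ω, expectedWait (Fintype.card ι) K (missingCoupons X n ω).card ∂μ)
      atTop (nhds 0) :=
    squeeze_zero hnonneg (integral_expectedWait_card_missingCoupons_le hindep hlaw K)
      (by simpa using hsummable.tendsto_atTop_zero.const_mul _)
  rw [hasSum_iff_tendsto_nat_of_nonneg fun _ ↦ measureReal_nonneg]
  simpa [hpartial] using hremainder.const_sub (expectedWait (Fintype.card ι) K (Fintype.card ι))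

theorem ae_exists_card_missingCoupons_le (K : ℕ) :
    ∀ᵐ ω ∂μ, ∃ n, (missingCoupons X n ω).card ≤ K := by
  have := hindep.isProbabilityMeasure
  have hzero := (hasSum_measureReal_lt_card_missingCoupons hindep hlaw K).summable
    |>.tendsto_atTop_zero
  rw [ae_iff, ← measureReal_eq_zero_iff]
  refine le_antisymm (ge_of_tendsto' hzero fun n ↦ measureReal_mono fun ω hω ↦ ?_)
    measureReal_nonneg
  exact not_le.1 fun h ↦ hω ⟨n, h⟩

theorem integral_waitingTime (K : ℕ) :
    ∫ ω, (waitingTime X K ω : ℝ) ∂μ =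
      expectedWait (Fintype.card ι) K (Fintype.card ι) := by
  have := hindep.isProbabilityMeasure
  have htail (n : ℕ) :
      {ω | n < waitingTime X K ω} =ᵐ[μ] {ω | K < (missingCoupons X n ω).card} := by
    filter_upwards [ae_exists_card_missingCoupons_le hindep hlaw K] with ω hω
    exact propext (lt_waitingTime_iff hω n)
  rw [integral_natCast_eq_tsum_measureReal_lt fun n ↦
    (nullMeasurableSet_lt_card_missingCoupons (fun i ↦ (hlaw i).aemeasurable) K n).congr
      (htail n).symm]
  simp only [measureReal_congr (htail _)]
  exact (hasSum_measureReal_lt_card_missingCoupons hindep hlaw K).tsum_eq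

end Collector

theorem uniformFin_eq_uniformOn_univ (B : ℕ) : uniformFin B = uniformOn Set.univ := by
  simp [uniformFin, uniformOn, ProbabilityTheory.cond]

theorem tendsto_expectedWait_add_div {K : ℕ → ℕ} {α : ℝ} (hα : 0 < α)
    (hK : Tendsto (fun B ↦ (K B : ℝ) / B) atTop (nhds α)) :
    Tendsto (fun B : ℕ ↦ (expectedWait B (K B) B + K B) / B) atTop
      (nhds (Real.posLog (1 / α) + α)) := by
  have hK_top : Tendsto K atTop atTop := tendsto_atTop_of_tendsto_natCast_div tendsto_id hα hK
  have hratio : Tendsto (fun B ↦ ((max B (K B) : ℕ) : ℝ) / K B) atTop (nhds (max 1 (1 / α))) := by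
    rw [one_div]
    refine (tendsto_const_nhds.max (hK.inv₀ hα.ne')).congr' ?_
    filter_upwards [hK_top.eventually_ne_atTop 0] with B hKB
    rw [inv_div, Nat.cast_max, ← max_div_div_right (Nat.cast_nonneg _),
      div_self (Nat.cast_ne_zero.2 hKB), max_comm]
  rw [Real.posLog_eq_log_max_one (by positivity)]
  refine ((tendsto_harmonic_sub_harmonic hK_top (by positivity) hratio).add hK).congr' ?_
  filter_upwards [eventually_ne_atTop 0] with B hB
  rw [expectedWait]
  field_simp

/-- For `1 < α` eventually no draw is needed, whence `log⁺` in place of `log`. -/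
theorem factor_tendsto_of_replacement_fraction_general {α : ℝ} (hα : 0 < α) {K : ℕ → ℕ}
    (hK : Tendsto (fun B ↦ (K B : ℝ) / B) atTop (nhds α))
    {Ω : ℕ → Type*} [∀ B, MeasurableSpace (Ω B)] {μ : ∀ B, Measure (Ω B)}
    {X : ∀ B, ℕ → Ω B → Fin B}
    (hindep : ∀ᶠ B in atTop, iIndepFun (X B) (μ B))
    (hlaw : ∀ᶠ B in atTop, ∀ i, HasLaw (X B i) (uniformFin B) (μ B)) :
    Tendsto (fun B : ℕ ↦ ((∫ ω, (collectTime B (K B) (X B · ω) : ℝ) ∂(μ B)) + K B) / B) atTop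
      (nhds (Real.posLog (1 / α) + α)) := by
  refine (tendsto_expectedWait_add_div hα hK).congr' ?_
  filter_upwards [hindep, hlaw] with B hindepB hlawB
  simp only [uniformFin_eq_uniformOn_univ] at hlawB
  simp only [collectTime_eq_waitingTime, integral_waitingTime hindepB hlawB, Fintype.card_fin]

/-- **The factor depends asymptotically only on the replacement fraction.** Fix `α ∈ (0,1]` and
set `K_B = ⌈α B⌉`. For any family `μ B` of probability measures on `ℕ → Fin B` (for `B ≥ 1`)
under which the draws are independent and uniform on the `B` coupons, the factor
`f_B = (E[T_{B,K_B}] + K_B)/B` converges to `ln(1/α) + α` as `B → ∞`. -/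
theorem factor_tendsto_of_replacement_fraction
    (α : ℝ) (hα : α ∈ Set.Ioc (0 : ℝ) 1)
    (μ : ∀ B : ℕ, Measure (ℕ → Fin B))
    (hprob : ∀ B : ℕ, 1 ≤ B → IsProbabilityMeasure (μ B))
    (hIndep : ∀ B : ℕ, 1 ≤ B →
      iIndepFun (fun i (ω : ℕ → Fin B) => ω i) (μ B))
    (hUnif : ∀ B : ℕ, 1 ≤ B → ∀ i : ℕ, (μ B).map (fun ω => ω i) = uniformFin B) :
    Tendsto
      (fun B : ℕ =>
        ((∫ ω, (collectTime B ⌈α * B⌉₊ ω : ℝ) ∂(μ B)) + (⌈α * B⌉₊ : ℝ)) / B)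
      atTop (nhds (Real.log (1 / α) + α)) := by
  have hK : Tendsto (fun B : ℕ ↦ (⌈α * B⌉₊ : ℝ) / B) atTop (nhds α) :=
    (tendsto_nat_ceil_mul_div_atTop hα.1.le).comp tendsto_natCast_atTop_atTop
  have hlog : Real.posLog (1 / α) = Real.log (1 / α) :=
    Real.posLog_eq_log ((one_le_one_div hα.1 hα.2).trans (le_abs_self _))
  rw [← hlog]
  exact factor_tendsto_of_replacement_fraction_general hα.1 hK
    (eventually_atTop.2 ⟨1, hIndep⟩)
    (eventually_atTop.2 ⟨1, fun B hB i ↦ ⟨(measurable_pi_apply i).aemeasurable, hUnif B hB i⟩⟩)
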